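/- Let 𝒯 be a nice tree decomposition of a graph G=(V,E). Then for every S ⊆ V, the tree decomposition 𝒯 is S-nice. -/

import Mathlib

/-! Preliminary definitions: rooted tree decompositions, `S`-traces, `S`-nice and
slim tree decompositions, following Chapelle et al. -/

/-- A walk in `G` all of whose vertices lie in the set `W`. -/
def SimpleGraph.ReachableIn {V : Type} (G : SimpleGraph V) (W : Set V) (u v : V) : Prop :=
  ∃ p : G.Walk u v, ∀ x ∈ p.support, x ∈ W

/-- The open neighborhood of a set of vertices. -/
def SimpleGraph.nbhdSet {V : Type} (G : SimpleGraph V) (W : Set V) : Set V :=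
  {x | x ∉ W ∧ ∃ w ∈ W, G.Adj w x}

/-- The vertex set of the connected component of `G − X` that contains `v`
(assuming `v ∉ X`). -/
def SimpleGraph.compOutside {V : Type} (G : SimpleGraph V) (X : Set V) (v : V) : Set V :=
  {w | G.ReachableIn Xᶜ v w}

/-- A rooted tree decomposition of a graph `G` on vertex type `V`, with node type `ι`.
The rooted tree is given by a parent function: the root is a fixed point of `parent`
and every node reaches the root by iterating `parent`.  The bags satisfy the three
usual conditions of a tree decomposition; connectedness of `{t | v ∈ bag t}` is
expressed by the existence of a highest node `m` containing `v` such that from any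
node whose bag contains `v` the whole ancestor chain up to `m` contains `v`. -/
structure RootedTreeDecomp (V ι : Type) (G : SimpleGraph V) where
  root : ι
  parent : ι → ι
  parent_root : parent root = root
  reaches_root : ∀ t : ι, ∃ n : ℕ, parent^[n] t = root
  bag : ι → Set V
  bags_cover : ∀ v : V, ∃ t : ι, v ∈ bag t
  bags_of_edges : ∀ ⦃u v : V⦄, G.Adj u v → ∃ t : ι, u ∈ bag t ∧ v ∈ bag t
  bags_connected : ∀ v : V, ∃ m : ι, v ∈ bag m ∧
    ∀ t : ι, v ∈ bag t → ∃ n : ℕ, parent^[n] t = m ∧ ∀ i ≤ n, v ∈ bag (parent^[i] t)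

namespace RootedTreeDecomp

variable {V ι : Type} {G : SimpleGraph V}

/-- `t'` lies in the subtree `T_t` rooted at `t`; equivalently, `t` is an
ancestor (possibly equal) of `t'`. -/
def InSubtree (𝒯 : RootedTreeDecomp V ι G) (t t' : ι) : Prop :=
  ∃ n : ℕ, 𝒯.parent^[n] t' = t

/-- `t` is the parent of `t'`. -/
def IsParent (𝒯 : RootedTreeDecomp V ι G) (t t' : ι) : Prop :=
  t' ≠ 𝒯.root ∧ 𝒯.parent t' = t

/-- `V_t`: the union of the bags of the nodes of the subtree rooted at `t`. -/
def Vt (𝒯 : RootedTreeDecomp V ι G) (t : ι) : Set V :=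
  {v | ∃ t', 𝒯.InSubtree t t' ∧ v ∈ 𝒯.bag t'}

/-- `L_t = V_t ∖ X_t`. -/
def Lt (𝒯 : RootedTreeDecomp V ι G) (t : ι) : Set V := 𝒯.Vt t \ 𝒯.bag t

/-- `R_t = V ∖ V_t`. -/
def Rt (𝒯 : RootedTreeDecomp V ι G) (t : ι) : Set V := (𝒯.Vt t)ᶜ

/-- `L_t^S = L_t ∩ S`. -/
def LS (𝒯 : RootedTreeDecomp V ι G) (S : Set V) (t : ι) : Set V := 𝒯.Lt t ∩ S

/-- `X_t^S = X_t ∩ S`. -/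
def XS (𝒯 : RootedTreeDecomp V ι G) (S : Set V) (t : ι) : Set V := 𝒯.bag t ∩ S

/-- `R_t^S = R_t ∩ S`. -/
def RS (𝒯 : RootedTreeDecomp V ι G) (S : Set V) (t : ι) : Set V := 𝒯.Rt t ∩ S

/-- The `S`-trace of a node `t`. -/
def STrace (𝒯 : RootedTreeDecomp V ι G) (S : Set V) (t : ι) : Set V × Set V × Set V :=
  (𝒯.LS S t, 𝒯.XS S t, 𝒯.RS S t)

/-- Every bag has size at most `k + 1`, i.e. the width is at most `k`. -/
def WidthAtMost (𝒯 : RootedTreeDecomp V ι G) (k : ℕ) : Prop :=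
  ∀ t : ι, (𝒯.bag t).ncard ≤ k + 1

/-- The width of the decomposition (max bag size minus one) is exactly `k`. -/
def HasWidth (𝒯 : RootedTreeDecomp V ι G) (k : ℕ) : Prop :=
  𝒯.WidthAtMost k ∧ ∃ t : ι, (𝒯.bag t).ncard = k + 1

/-- `t'` is an `S`-child of `t`. -/
def IsSChild (𝒯 : RootedTreeDecomp V ι G) (S : Set V) (t t' : ι) : Prop :=
  𝒯.IsParent t t' ∧ ((𝒯.LS S t' ∪ 𝒯.XS S t') \ (𝒯.RS S t ∪ 𝒯.XS S t)).Nonempty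

/-- `t` is an `S`-bottom node: `L_t^S ≠ ∅` and `t` is the bottom node of the
directed path of its own `S`-trace (every node with the same `S`-trace is an
ancestor of `t`). -/
def IsSBottom (𝒯 : RootedTreeDecomp V ι G) (S : Set V) (t : ι) : Prop :=
  (𝒯.LS S t).Nonempty ∧ ∀ t', 𝒯.STrace S t' = 𝒯.STrace S t → 𝒯.InSubtree t' t

/-- `t` admits the `S`-operation `introduce(v)`. -/
def AdmitsIntroduce (𝒯 : RootedTreeDecomp V ι G) (S : Set V) (t : ι) (v : V) : Prop :=
  ∃ t₁, 𝒯.IsSChild S t t₁ ∧ (∀ t₂, 𝒯.IsSChild S t t₂ → t₂ = t₁) ∧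
    v ∈ S ∧ v ∉ 𝒯.bag t₁ ∧ 𝒯.XS S t = 𝒯.XS S t₁ ∪ {v}

/-- `t` admits the `S`-operation `forget(v)`. -/
def AdmitsForget (𝒯 : RootedTreeDecomp V ι G) (S : Set V) (t : ι) (v : V) : Prop :=
  ∃ t₁, 𝒯.IsSChild S t t₁ ∧ (∀ t₂, 𝒯.IsSChild S t t₂ → t₂ = t₁) ∧
    v ∈ S ∧ v ∈ 𝒯.bag t₁ ∧ 𝒯.XS S t = 𝒯.XS S t₁ \ {v}

/-- `t` admits the `S`-operation `join` with the two `S`-children `t₁, t₂`. -/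
def AdmitsJoin (𝒯 : RootedTreeDecomp V ι G) (S : Set V) (t t₁ t₂ : ι) : Prop :=
  t₁ ≠ t₂ ∧ 𝒯.IsSChild S t t₁ ∧ 𝒯.IsSChild S t t₂ ∧
    (∀ t₃, 𝒯.IsSChild S t t₃ → t₃ = t₁ ∨ t₃ = t₂) ∧
    𝒯.XS S t₁ ∪ 𝒯.XS S t₂ ⊆ 𝒯.XS S t

/-- `S`-nice tree decomposition: bags along tree edges are comparable and differ in
size by at most one, and every `S`-bottom node admits one of the `S`-operations. -/
def IsSNice (𝒯 : RootedTreeDecomp V ι G) (S : Set V) : Prop :=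
  (∀ t t' : ι, 𝒯.IsParent t' t →
      (𝒯.bag t ⊆ 𝒯.bag t' ∨ 𝒯.bag t' ⊆ 𝒯.bag t) ∧
      (𝒯.bag t).ncard ≤ (𝒯.bag t').ncard + 1 ∧ (𝒯.bag t').ncard ≤ (𝒯.bag t).ncard + 1) ∧
  ∀ t : ι, 𝒯.IsSBottom S t →
    (∃ v, 𝒯.AdmitsIntroduce S t v) ∨ (∃ v, 𝒯.AdmitsForget S t v) ∨
      (∃ t₁ t₂, 𝒯.AdmitsJoin S t t₁ t₂)

/-- Nice tree decomposition: root and leaves have empty bags, and every internal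
node is an introduce, forget, or join node. -/
def IsNice (𝒯 : RootedTreeDecomp V ι G) : Prop :=
  𝒯.bag 𝒯.root = ∅ ∧
  (∀ t : ι, (∀ t', ¬𝒯.IsParent t t') → 𝒯.bag t = ∅) ∧
  ∀ t : ι, (∃ t', 𝒯.IsParent t t') →
    (∃ t', 𝒯.IsParent t t' ∧ (∀ t'', 𝒯.IsParent t t'' → t'' = t') ∧
      ((∃ v, v ∉ 𝒯.bag t' ∧ 𝒯.bag t = 𝒯.bag t' ∪ {v}) ∨
        (∃ v, v ∈ 𝒯.bag t' ∧ 𝒯.bag t = 𝒯.bag t' \ {v}))) ∨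
    (∃ t₁ t₂, t₁ ≠ t₂ ∧ 𝒯.IsParent t t₁ ∧ 𝒯.IsParent t t₂ ∧
      (∀ t₃, 𝒯.IsParent t t₃ → t₃ = t₁ ∨ t₃ = t₂) ∧
      𝒯.bag t = 𝒯.bag t₁ ∧ 𝒯.bag t = 𝒯.bag t₂)

/-- A set of nodes inducing a connected subtree of the tree: it contains a node `m`
such that from every node of the set the whole ancestor chain up to `m` stays in
the set. -/
def ConnectedNodeSet (𝒯 : RootedTreeDecomp V ι G) (A : Set ι) : Prop :=
  ∃ m ∈ A, ∀ t ∈ A, ∃ n : ℕ, 𝒯.parent^[n] t = m ∧ ∀ i ≤ n, 𝒯.parent^[i] t ∈ A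

/-- A full join tree: a non-trivial inclusion-maximal connected set of nodes all of
which share one and the same full bag `X` (of size `k + 1`). -/
def IsFullJoinTree (𝒯 : RootedTreeDecomp V ι G) (k : ℕ) (A : Set ι) (X : Set V) : Prop :=
  A.Nontrivial ∧ 𝒯.ConnectedNodeSet A ∧ X.ncard = k + 1 ∧ (∀ t ∈ A, 𝒯.bag t = X) ∧
  ∀ A' : Set ι, A ⊆ A' → 𝒯.ConnectedNodeSet A' → (∀ t ∈ A', 𝒯.bag t = X) → A' = A

/-- `m` is the root (top node) of the node set `A`. -/
def IsTopOf (𝒯 : RootedTreeDecomp V ι G) (A : Set ι) (m : ι) : Prop :=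
  m ∈ A ∧ ∀ t ∈ A, 𝒯.InSubtree m t

/-- The condition on a pair `(u, ti)` appearing in condition (7) of slimness:
either `ti` belongs to `T'_C` (it is an `S`-child of a node of the full join tree
`A` but is not itself in `A`) and `u ∈ V_{ti}`, or `ti` is the parent of the root
`tr` of the full join tree and `u ∈ V ∖ V_{tr}`. -/
def FullJoinBranch (𝒯 : RootedTreeDecomp V ι G) (S : Set V) (A : Set ι) (tr : ι)
    (u : V) (ti : ι) : Prop :=
  (ti ∉ A ∧ (∃ ta ∈ A, 𝒯.IsSChild S ta ti) ∧ u ∈ 𝒯.Vt ti) ∨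
  (tr ≠ 𝒯.root ∧ ti = 𝒯.parent tr ∧ u ∉ 𝒯.Vt tr)

/-- Slim `S`-nice tree decomposition of width `k` (the seven conditions of the
paper; a bag is *full* if it has size `k + 1`). -/
def IsSlim (𝒯 : RootedTreeDecomp V ι G) (S : Set V) (k : ℕ) : Prop :=
  -- (1) the root is not an S-bottom node
  (¬𝒯.IsSBottom S 𝒯.root) ∧
  -- (2) S-bottom nodes with two S-children
  (∀ t t₁ t₂ : ι, 𝒯.IsSBottom S t → t₁ ≠ t₂ → 𝒯.IsSChild S t t₁ → 𝒯.IsSChild S t t₂ →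
    (∃ A X, 𝒯.IsFullJoinTree k A X ∧ t ∈ A) ∨
      ((𝒯.bag t₁).ncard ≠ k + 1 ∧ (𝒯.bag t₂).ncard ≠ k + 1 ∧
        (𝒯.bag t₁).ncard ≤ (𝒯.bag t).ncard ∧ (𝒯.bag t₂).ncard ≤ (𝒯.bag t).ncard ∧
        ∀ tp, 𝒯.IsParent tp t →
          (𝒯.bag tp).ncard ≠ k + 1 ∧ (𝒯.bag tp).ncard ≤ (𝒯.bag t).ncard)) ∧
  -- (3) S-bottom nodes with a non-full bag
  (∀ t tp : ι, 𝒯.IsSBottom S t → (𝒯.bag t).ncard ≠ k + 1 → 𝒯.IsParent tp t →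
    𝒯.bag t = 𝒯.bag tp ∧ ∀ t'', 𝒯.IsSChild S tp t'' → t'' = t) ∧
  -- (4) S-bottom nodes admitting forget(v)
  (∀ t v t', 𝒯.IsSBottom S t → 𝒯.AdmitsForget S t v → 𝒯.IsSChild S t t' →
    (𝒯.bag t').ncard ≠ k + 1 →
    (∀ t₁ t₂, 𝒯.IsSChild S t' t₁ → 𝒯.IsSChild S t' t₂ → t₁ = t₂) ∧
      ∀ t'', 𝒯.IsSChild S t' t'' → 𝒯.bag t' = 𝒯.bag t'') ∧
  -- (5) parents of S-bottom nodes with non-full bags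
  (∀ t tp, 𝒯.IsSBottom S t → 𝒯.IsParent tp t → (𝒯.bag tp).ncard ≠ k + 1 →
    tp = 𝒯.root ∨ ∀ tpp, 𝒯.IsParent tpp tp → ¬𝒯.IsSBottom S tpp) ∧
  -- (6) nodes of full join trees
  (∀ A X, 𝒯.IsFullJoinTree k A X → ∀ t ∈ A,
    𝒯.IsSBottom S t ∧ ∃ t₁ t₂, t₁ ≠ t₂ ∧ 𝒯.IsSChild S t t₁ ∧ 𝒯.IsSChild S t t₂) ∧
  -- (7) branching condition of full join trees
  (∀ A X tr, 𝒯.IsFullJoinTree k A X → 𝒯.IsTopOf A tr →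
    ∀ v ∈ X \ S, ∃ u₁ u₂ u₃ : V, ∃ t₁ t₂ t₃ : ι,
      u₁ ≠ u₂ ∧ u₁ ≠ u₃ ∧ u₂ ≠ u₃ ∧ t₁ ≠ t₂ ∧ t₁ ≠ t₃ ∧ t₂ ≠ t₃ ∧
      (G.Adj v u₁ ∧ u₁ ∉ X ∧ (∃ s ∈ S, G.ReachableIn Xᶜ u₁ s) ∧
        𝒯.FullJoinBranch S A tr u₁ t₁) ∧
      (G.Adj v u₂ ∧ u₂ ∉ X ∧ (∃ s ∈ S, G.ReachableIn Xᶜ u₂ s) ∧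
        𝒯.FullJoinBranch S A tr u₂ t₂) ∧
      (G.Adj v u₃ ∧ u₃ ∉ X ∧ (∃ s ∈ S, G.ReachableIn Xᶜ u₃ s) ∧
        𝒯.FullJoinBranch S A tr u₃ t₃))

end RootedTreeDecomp

/-- `tw(G) ≤ k`: `G` admits a (rooted) tree decomposition of width at most `k`. -/
def SimpleGraph.TreewidthAtMost {V : Type} (G : SimpleGraph V) (k : ℕ) : Prop :=
  ∃ (ι : Type) (𝒯 : RootedTreeDecomp V ι G), 𝒯.WidthAtMost k

/-! A node and a child with the same `S`-trace show that the node is not `S`-bottom. Every vertex of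
`S ∩ V_t` lies in `X_t` or in `V_c` for some `S`-child `c` of `t`; so if `t` has at most one
`S`-child, the child `c` of `t` has the same trace as soon as `X_c^S = X_t^S`. Hence an `S`-bottom
node which introduces or forgets `v` must have `v ∈ S`, and both children of an `S`-bottom join node
are `S`-children. -/

section WCovBy

variable {α : Type*} {s t : Set α}

theorem finite_iff_of_wcovBy (h : s ⩿ t) : s.Finite ↔ t.Finite := by
  obtain hst | rfl := wcovBy_iff_covBy_or_eq.mp h
  · obtain ⟨a, -, rfl⟩ := Set.covBy_iff_exists_insert.mp hst
    exact Set.finite_insert.symm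
  · rfl

theorem ncard_le_ncard_add_one_of_wcovBy (h : s ⩿ t) : t.ncard ≤ s.ncard + 1 := by
  obtain hst | rfl := wcovBy_iff_covBy_or_eq.mp h
  · obtain ⟨a, -, rfl⟩ := Set.covBy_iff_exists_insert.mp hst
    exact Set.ncard_insert_le a s
  · exact Nat.le_succ _

end WCovBy

namespace RootedTreeDecomp

variable {V ι : Type} {G : SimpleGraph V} {𝒯 : RootedTreeDecomp V ι G} {S : Set V}
  {t t' t₁ t₂ : ι} {v : V}

theorem eq_root_of_isPeriodicPt {n : ℕ} (hn : 0 < n)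
    (h : Function.IsPeriodicPt 𝒯.parent n t) : t = 𝒯.root := by
  obtain ⟨m, hm⟩ := 𝒯.reaches_root t
  have hle : m ≤ m * n := Nat.le_mul_of_pos_right m hn
  calc
    t = 𝒯.parent^[m * n] t := (h.const_mul m).symm
    _ = 𝒯.parent^[m * n - m] 𝒯.root := by
      rw [← hm, ← Function.iterate_add_apply, Nat.sub_add_cancel hle]
    _ = 𝒯.root := Function.iterate_fixed 𝒯.parent_root _

theorem IsParent.not_inSubtree (h : 𝒯.IsParent t t') : ¬ 𝒯.InSubtree t' t := by
  rintro ⟨n, hn⟩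
  refine h.1 (eq_root_of_isPeriodicPt n.succ_pos ?_)
  rw [Function.IsPeriodicPt, Function.IsFixedPt, Function.iterate_succ_apply, h.2, hn]

theorem inSubtree_iff_eq_or_exists_isParent :
    𝒯.InSubtree t t' ↔ t' = t ∨ ∃ c, 𝒯.IsParent t c ∧ 𝒯.InSubtree c t' := by
  constructor
  · rintro ⟨n, hn⟩
    induction n with
    | zero => exact Or.inl hn
    | succ n ih =>
      rw [Function.iterate_succ_apply'] at hn
      by_cases hroot : 𝒯.parent^[n] t' = 𝒯.root
      · -- The root is its own parent but not its own child: drop the last step.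
        rw [hroot, 𝒯.parent_root] at hn
        exact ih (hroot.trans hn)
      · exact Or.inr ⟨_, ⟨hroot, hn⟩, n, rfl⟩
  · rintro (rfl | ⟨c, hc, n, hn⟩)
    · exact ⟨0, rfl⟩
    · exact ⟨n + 1, by rw [Function.iterate_succ_apply', hn, hc.2]⟩

theorem mem_Vt_iff : v ∈ 𝒯.Vt t ↔ v ∈ 𝒯.bag t ∨ ∃ c, 𝒯.IsParent t c ∧ v ∈ 𝒯.Vt c := by
  simp only [Vt, Set.mem_ofPred_eq, inSubtree_iff_eq_or_exists_isParent (t := t)]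
  grind

theorem bag_subset_Vt : 𝒯.bag t ⊆ 𝒯.Vt t := fun _ hv => mem_Vt_iff.mpr (Or.inl hv)

theorem IsParent.Vt_subset (h : 𝒯.IsParent t t') : 𝒯.Vt t' ⊆ 𝒯.Vt t :=
  fun _ hv => mem_Vt_iff.mpr (Or.inr ⟨t', h, hv⟩)

theorem isSChild_iff :
    𝒯.IsSChild S t t' ↔ 𝒯.IsParent t t' ∧ ∃ v ∈ S, v ∈ 𝒯.Vt t' ∧ v ∉ 𝒯.bag t := by
  refine and_congr_right fun h => exists_congr fun v => ?_
  have hbag : v ∈ 𝒯.bag t' → v ∈ 𝒯.Vt t' := fun hv => bag_subset_Vt hv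
  have hVt : v ∈ 𝒯.Vt t' → v ∈ 𝒯.Vt t := fun hv => h.Vt_subset hv
  simp only [LS, XS, RS, Lt, Rt, Set.mem_sdiff, Set.mem_union, Set.mem_inter_iff,
    Set.mem_compl_iff]
  tauto

theorem mem_Vt_iff_of_mem (hv : v ∈ S) :
    v ∈ 𝒯.Vt t ↔ v ∈ 𝒯.bag t ∨ ∃ c, 𝒯.IsSChild S t c ∧ v ∈ 𝒯.Vt c := by
  rw [mem_Vt_iff]
  constructor
  · rintro (hbag | ⟨c, hc, hvc⟩)
    · exact Or.inl hbag
    · exact or_iff_not_imp_left.mpr fun hbag =>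
        ⟨c, isSChild_iff.mpr ⟨hc, v, hv, hvc, hbag⟩, hvc⟩
  · exact Or.imp_right fun ⟨c, hc, hvc⟩ => ⟨c, hc.1, hvc⟩

theorem sTrace_eq_of_inter_eq (hV : 𝒯.Vt t' ∩ S = 𝒯.Vt t ∩ S) (hX : 𝒯.XS S t' = 𝒯.XS S t) :
    𝒯.STrace S t' = 𝒯.STrace S t := by
  have LS_eq (u : ι) : 𝒯.LS S u = (𝒯.Vt u ∩ S) \ 𝒯.XS S u := by
    rw [LS, Lt, XS, Set.inter_sdiff_distrib_right]
  have RS_eq (u : ι) : 𝒯.RS S u = S \ (𝒯.Vt u ∩ S) := by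
    rw [RS, Rt, Set.sdiff_inter_self_eq_sdiff, Set.sdiff_eq, Set.inter_comm]
  simp only [STrace, LS_eq, RS_eq, hV, hX]

theorem sTrace_eq_of_forall_isSChild (hp : 𝒯.IsParent t t')
    (honly : ∀ c, 𝒯.IsSChild S t c → c = t') (hX : 𝒯.XS S t' = 𝒯.XS S t) :
    𝒯.STrace S t' = 𝒯.STrace S t := by
  refine sTrace_eq_of_inter_eq (Set.Subset.antisymm ?_ ?_) hX
  · exact Set.inter_subset_inter_left S hp.Vt_subset
  · rintro v ⟨hvt, hvS⟩
    obtain hbag | ⟨c, hc, hvc⟩ := (mem_Vt_iff_of_mem hvS).mp hvt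
    · have hvX : v ∈ 𝒯.XS S t' := hX ▸ ⟨hbag, hvS⟩
      exact ⟨bag_subset_Vt hvX.1, hvS⟩
    · exact ⟨honly c hc ▸ hvc, hvS⟩

theorem IsSBottom.exists_isSChild (hb : 𝒯.IsSBottom S t) : ∃ c, 𝒯.IsSChild S t c := by
  obtain ⟨v, ⟨hvt, hbag⟩, hvS⟩ := hb.1
  obtain ⟨c, hc, -⟩ := ((mem_Vt_iff_of_mem hvS).mp hvt).resolve_left hbag
  exact ⟨c, hc⟩

theorem IsSBottom.XS_ne_of_forall_isSChild (hb : 𝒯.IsSBottom S t) (hp : 𝒯.IsParent t t')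
    (honly : ∀ c, 𝒯.IsSChild S t c → c = t') : 𝒯.XS S t' ≠ 𝒯.XS S t := fun hX =>
  hp.not_inSubtree (hb.2 t' (sTrace_eq_of_forall_isSChild hp honly hX))

/-- `t'` is the unique child of `t`. -/
def IsOnlyChild (𝒯 : RootedTreeDecomp V ι G) (t t' : ι) : Prop :=
  𝒯.IsParent t t' ∧ ∀ c, 𝒯.IsParent t c → c = t'

/-- `t` is an introduce node: its only child is `t'`, and `t` introduces `v`. -/
def IsIntroduceNode (𝒯 : RootedTreeDecomp V ι G) (t t' : ι) (v : V) : Prop :=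
  𝒯.IsOnlyChild t t' ∧ v ∉ 𝒯.bag t' ∧ 𝒯.bag t = 𝒯.bag t' ∪ {v}

/-- `t` is a forget node: its only child is `t'`, and `t` forgets `v`. -/
def IsForgetNode (𝒯 : RootedTreeDecomp V ι G) (t t' : ι) (v : V) : Prop :=
  𝒯.IsOnlyChild t t' ∧ v ∈ 𝒯.bag t' ∧ 𝒯.bag t = 𝒯.bag t' \ {v}

/-- `t` is a join node with the two children `t₁` and `t₂`. -/
def IsJoinNode (𝒯 : RootedTreeDecomp V ι G) (t t₁ t₂ : ι) : Prop :=
  t₁ ≠ t₂ ∧ 𝒯.IsParent t t₁ ∧ 𝒯.IsParent t t₂ ∧ (∀ c, 𝒯.IsParent t c → c = t₁ ∨ c = t₂) ∧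
    𝒯.bag t = 𝒯.bag t₁ ∧ 𝒯.bag t = 𝒯.bag t₂

/-- Every internal node is an introduce, forget or join node; the bags of the root and of the leaves
are arbitrary, unlike in a nice tree decomposition. -/
def IsInternallyNice (𝒯 : RootedTreeDecomp V ι G) : Prop :=
  ∀ t, (∃ t', 𝒯.IsParent t t') →
    (∃ t' v, 𝒯.IsIntroduceNode t t' v) ∨ (∃ t' v, 𝒯.IsForgetNode t t' v) ∨
      ∃ t₁ t₂, 𝒯.IsJoinNode t t₁ t₂

theorem IsNice.isInternallyNice (h : 𝒯.IsNice) : 𝒯.IsInternallyNice := by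
  intro t ht
  obtain ⟨t', hp, honly, ⟨v, hv⟩ | ⟨v, hv⟩⟩ | hjoin := h.2.2 t ht
  · exact Or.inl ⟨t', v, ⟨hp, honly⟩, hv⟩
  · exact Or.inr (Or.inl ⟨t', v, ⟨hp, honly⟩, hv⟩)
  · exact Or.inr (Or.inr hjoin)

theorem IsOnlyChild.isSChild (h : 𝒯.IsOnlyChild t t') (hb : 𝒯.IsSBottom S t) :
    𝒯.IsSChild S t t' := by
  obtain ⟨c, hc⟩ := hb.exists_isSChild
  exact h.2 c hc.1 ▸ hc

theorem IsOnlyChild.XS_ne (h : 𝒯.IsOnlyChild t t') (hb : 𝒯.IsSBottom S t) :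
    𝒯.XS S t' ≠ 𝒯.XS S t :=
  hb.XS_ne_of_forall_isSChild h.1 fun c hc => h.2 c hc.1

theorem IsIntroduceNode.admitsIntroduce (h : 𝒯.IsIntroduceNode t t' v)
    (hb : 𝒯.IsSBottom S t) : 𝒯.AdmitsIntroduce S t v := by
  obtain ⟨honly, hv, hbag⟩ := h
  have hX : 𝒯.XS S t = 𝒯.XS S t' ∪ {v} ∩ S := by rw [XS, hbag, Set.union_inter_distrib_right, XS]
  have hvS : v ∈ S := by
    by_contra hvS
    refine honly.XS_ne hb ?_
    rw [hX, Set.singleton_inter_eq_empty.mpr hvS, Set.union_empty]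
  rw [Set.singleton_inter_of_mem hvS] at hX
  exact ⟨t', honly.isSChild hb, fun c hc => honly.2 c hc.1, hvS, hv, hX⟩

theorem IsForgetNode.admitsForget (h : 𝒯.IsForgetNode t t' v)
    (hb : 𝒯.IsSBottom S t) : 𝒯.AdmitsForget S t v := by
  obtain ⟨honly, hv, hbag⟩ := h
  have hX : 𝒯.XS S t = 𝒯.XS S t' \ {v} := by rw [XS, hbag, Set.sdiff_inter_right_comm, XS]
  have hvS : v ∈ S := by
    by_contra hvS
    refine honly.XS_ne hb ?_
    rw [hX, Set.sdiff_singleton_eq_self fun hvX => hvS hvX.2]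
  exact ⟨t', honly.isSChild hb, fun c hc => honly.2 c hc.1, hvS, hv, hX⟩

theorem IsJoinNode.symm (h : 𝒯.IsJoinNode t t₁ t₂) : 𝒯.IsJoinNode t t₂ t₁ := by
  obtain ⟨hne, h₁, h₂, hchild, hbag₁, hbag₂⟩ := h
  exact ⟨hne.symm, h₂, h₁, fun c hc => (hchild c hc).symm, hbag₂, hbag₁⟩

theorem IsJoinNode.isSChild_left (h : 𝒯.IsJoinNode t t₁ t₂) (hb : 𝒯.IsSBottom S t) :
    𝒯.IsSChild S t t₁ := by
  obtain ⟨-, -, hp₂, hchild, -, hbag⟩ := h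
  by_contra hnot
  have hX : 𝒯.XS S t₂ = 𝒯.XS S t := by rw [XS, XS, hbag]
  refine hb.XS_ne_of_forall_isSChild hp₂ (fun c hc => (hchild c hc.1).resolve_left ?_) hX
  rintro rfl
  exact hnot hc

theorem IsJoinNode.admitsJoin (h : 𝒯.IsJoinNode t t₁ t₂) (hb : 𝒯.IsSBottom S t) :
    𝒯.AdmitsJoin S t t₁ t₂ := by
  have hsub : 𝒯.XS S t₁ ∪ 𝒯.XS S t₂ ⊆ 𝒯.XS S t := by
    obtain ⟨-, -, -, -, hbag₁, hbag₂⟩ := h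
    rw [XS, XS, XS, ← hbag₁, ← hbag₂, Set.union_self]
  exact ⟨h.1, h.isSChild_left hb, h.symm.isSChild_left hb, fun c hc => h.2.2.2.1 c hc.1, hsub⟩

theorem IsInternallyNice.bag_wcovBy_or_wcovBy (h : 𝒯.IsInternallyNice) (hp : 𝒯.IsParent t t') :
    𝒯.bag t' ⩿ 𝒯.bag t ∨ 𝒯.bag t ⩿ 𝒯.bag t' := by
  obtain ⟨c, v, honly, -, hbag⟩ | ⟨c, v, honly, -, hbag⟩ |
    ⟨t₁, t₂, -, -, -, hchild, hbag₁, hbag₂⟩ := h t ⟨t', hp⟩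
  · obtain rfl := honly.2 t' hp
    rw [hbag, Set.union_singleton]
    exact Or.inl (Set.wcovBy_insert _ _)
  · obtain rfl := honly.2 t' hp
    rw [hbag]
    exact Or.inr (Set.sdiff_singleton_wcovBy _ _)
  · obtain rfl | rfl := hchild t' hp
    · exact Or.inl hbag₁.symm.wcovBy
    · exact Or.inl hbag₂.symm.wcovBy

theorem IsInternallyNice.finite_bag (h : 𝒯.IsInternallyNice) (hroot : (𝒯.bag 𝒯.root).Finite)
    (t : ι) : (𝒯.bag t).Finite := by
  obtain ⟨n, hn⟩ := 𝒯.reaches_root t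
  induction n generalizing t with
  | zero => exact (show t = 𝒯.root from hn) ▸ hroot
  | succ n ih =>
    by_cases ht : t = 𝒯.root
    · exact ht ▸ hroot
    · have hparent : (𝒯.bag (𝒯.parent t)).Finite := ih _ hn
      obtain hcov | hcov := h.bag_wcovBy_or_wcovBy ⟨ht, rfl⟩
      · exact (finite_iff_of_wcovBy hcov).mpr hparent
      · exact (finite_iff_of_wcovBy hcov).mp hparent

theorem IsInternallyNice.bag_comparable_and_ncard_le (h : 𝒯.IsInternallyNice)
    (hroot : (𝒯.bag 𝒯.root).Finite) (hp : 𝒯.IsParent t' t) :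
    (𝒯.bag t ⊆ 𝒯.bag t' ∨ 𝒯.bag t' ⊆ 𝒯.bag t) ∧
      (𝒯.bag t).ncard ≤ (𝒯.bag t').ncard + 1 ∧ (𝒯.bag t').ncard ≤ (𝒯.bag t).ncard + 1 := by
  obtain hcov | hcov := h.bag_wcovBy_or_wcovBy hp
  · have hle := Set.ncard_le_ncard hcov.le (h.finite_bag hroot t')
    exact ⟨Or.inl hcov.le, Nat.le_succ_of_le hle, ncard_le_ncard_add_one_of_wcovBy hcov⟩
  · have hle := Set.ncard_le_ncard hcov.le (h.finite_bag hroot t)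
    exact ⟨Or.inr hcov.le, ncard_le_ncard_add_one_of_wcovBy hcov, Nat.le_succ_of_le hle⟩

theorem IsInternallyNice.admits_of_isSBottom (h : 𝒯.IsInternallyNice) (hb : 𝒯.IsSBottom S t) :
    (∃ v, 𝒯.AdmitsIntroduce S t v) ∨ (∃ v, 𝒯.AdmitsForget S t v) ∨
      ∃ t₁ t₂, 𝒯.AdmitsJoin S t t₁ t₂ := by
  obtain ⟨c, hc⟩ := hb.exists_isSChild
  obtain ⟨t', v, hintro⟩ | ⟨t', v, hforget⟩ | ⟨t₁, t₂, hjoin⟩ := h t ⟨c, hc.1⟩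
  · exact Or.inl ⟨v, hintro.admitsIntroduce hb⟩
  · exact Or.inr (Or.inl ⟨v, hforget.admitsForget hb⟩)
  · exact Or.inr (Or.inr ⟨t₁, t₂, hjoin.admitsJoin hb⟩)

end RootedTreeDecomp

theorem statement4_general {V ι : Type} {G : SimpleGraph V} (𝒯 : RootedTreeDecomp V ι G)
    (h : 𝒯.IsInternallyNice) (hroot : (𝒯.bag 𝒯.root).Finite) (S : Set V) : 𝒯.IsSNice S :=
  ⟨fun _ _ hp => h.bag_comparable_and_ncard_le hroot hp, fun _ hb => h.admits_of_isSBottom hb⟩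

/-- Every nice tree decomposition is `S`-nice, for every `S ⊆ V`. -/
theorem statement4 {V ι : Type} [Fintype V] [DecidableEq V] {G : SimpleGraph V}
    (𝒯 : RootedTreeDecomp V ι G) (hnice : 𝒯.IsNice) (S : Set V) :
    𝒯.IsSNice S :=
  statement4_general 𝒯 hnice.isInternallyNice (hnice.1 ▸ Set.finite_empty) S
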